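/- Let A be a Hadamard matrix of order h ≥ 4, let d ≥ 1, and for each B ∈ {−1,1}^{h×d} define C by c_{ij} = sgn((AᵀB)_{ji}) and F = C A⁻¹ B. Then for all pairs (i, j) and (k, ℓ) with i ≠ j and k ≠ ℓ, |E[f_{ij} f_{kℓ}]| ≤ E[|f_{ij} f_{kℓ}|] ≤ 1. -/

import Mathlib

open Matrix

/-- The `±1` sign function: `sgn x = 1` if `x ≥ 0`, `−1` if `x < 0`. -/
noncomputable def sgn (x : ℝ) : ℝ := if 0 ≤ x then 1 else -1

/-- The `h × d` sign matrix corresponding to a Boolean matrix `b`. -/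
noncomputable def signMat {h d : ℕ} (b : Fin h → Fin d → Bool) :
    Matrix (Fin h) (Fin d) ℝ :=
  Matrix.of fun i j => if b i j then (1 : ℝ) else -1

/-- The matrix `C` with `c_{ij} = sgn((Aᵀ B)_{ji})`. -/
noncomputable def Cmat {h d : ℕ} (A : Matrix (Fin h) (Fin h) ℝ)
    (B : Matrix (Fin h) (Fin d) ℝ) : Matrix (Fin d) (Fin h) ℝ :=
  Matrix.of fun i j => sgn ((Aᵀ * B) j i)

/-- The matrix `F = C A⁻¹ B`. -/
noncomputable def Fmat {h d : ℕ} (A : Matrix (Fin h) (Fin h) ℝ)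
    (B : Matrix (Fin h) (Fin d) ℝ) : Matrix (Fin d) (Fin d) ℝ :=
  Cmat A B * A⁻¹ * B

/-- Expectation of `f(B)`, averaged over the `2^(h·d)` equally likely
`h × d` matrices `B` with entries in `{−1, 1}`. -/
noncomputable def expec (h d : ℕ) (f : Matrix (Fin h) (Fin d) ℝ → ℝ) : ℝ :=
  (∑ b : Fin h → Fin d → Bool, f (signMat b)) / 2 ^ (h * d)

/-!
Off the diagonal, `f_{ij} = v ⬝ b_j`, where `b_j` is column `j` of `B` and `v`, row `i` of `C A⁻¹`,
is determined by column `i ≠ j` alone. Flipping the sign of a single entry of `b_j` kills the cross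
terms in `E[f_{ij}²]`, leaving `E[f_{ij}²] = E[‖v‖²] = E[c (Aᵀ A)⁻¹ cᵀ]` with `c` row `i` of `C`.
As `Aᵀ A = h I` and `c` has `h` entries `±1`, this is at most one, and `|x y| ≤ (x² + y²) / 2`
passes from second moments to products.
-/

section LinearAlgebra

variable {n K : Type*} [Fintype n] [DecidableEq n]

lemma inv_smul_one [Field K] (c : K) :
    (c • (1 : Matrix n n K))⁻¹ = c⁻¹ • (1 : Matrix n n K) := by
  obtain rfl | hc := eq_or_ne c 0
  · simp
  · exact inv_eq_left_inv (by simp [smul_smul, hc])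

lemma vecMul_inv_dotProduct_self [CommRing K] (c : n → K) (A : Matrix n n K) :
    (c ᵥ* A⁻¹) ⬝ᵥ (c ᵥ* A⁻¹) = c ⬝ᵥ (Aᵀ * A)⁻¹ *ᵥ c := by
  rw [Matrix.mul_inv_rev, ← transpose_nonsing_inv, ← mulVec_mulVec, mulVec_transpose,
    dotProduct_mulVec]

end LinearAlgebra

section NegEntry

variable {m n R : Type*} [DecidableEq m] [DecidableEq n] [Neg R]

/-- The matrix `B` with the sign of its entry at `(p, j)` reversed. It is written as a change of
column `j`, so that functions of the other columns are visibly unaffected. -/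
def negEntry (p : m) (j : n) (B : Matrix m n R) : Matrix m n R :=
  B.updateCol j (Function.update (B.col j) p (-B p j))

lemma negEntry_apply (p : m) (j : n) (B : Matrix m n R) (q : m) (k : n) :
    negEntry p j B q k = if q = p ∧ k = j then -B q k else B q k := by
  by_cases hk : k = j <;> by_cases hq : q = p <;>
    simp [negEntry, hk, hq]

end NegEntry

section Expectation

variable {h d : ℕ} {f g : Matrix (Fin h) (Fin d) ℝ → ℝ}

lemma signMat_mul_self (b : Fin h → Fin d → Bool) (p : Fin h) (j : Fin d) :
    signMat b p j * signMat b p j = 1 := by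
  cases hb : b p j <;> simp [signMat, hb]

lemma expec_congr (hfg : ∀ b, f (signMat b) = g (signMat b)) : expec h d f = expec h d g := by
  simp only [expec, hfg]

lemma expec_mono (hfg : ∀ b, f (signMat b) ≤ g (signMat b)) : expec h d f ≤ expec h d g :=
  div_le_div_of_nonneg_right (Finset.sum_le_sum fun b _ => hfg b) (by positivity)

lemma expec_le_of_forall_le {c : ℝ} (hf : ∀ b, f (signMat b) ≤ c) : expec h d f ≤ c := by
  calc expec h d f ≤ expec h d fun _ => c := expec_mono hf
    _ = c := by simp [expec, mul_comm h d, pow_mul]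

lemma abs_expec_le : |expec h d f| ≤ expec h d fun B => |f B| := by
  rw [expec, abs_div, abs_of_pos (by positivity : (0 : ℝ) < 2 ^ (h * d))]
  exact div_le_div_of_nonneg_right (Finset.abs_sum_le_sum_abs _ _) (by positivity)

lemma expec_sum {ι : Type*} (s : Finset ι) (F : ι → Matrix (Fin h) (Fin d) ℝ → ℝ) :
    expec h d (fun B => ∑ i ∈ s, F i B) = ∑ i ∈ s, expec h d (F i) := by
  simp only [expec, ← Finset.sum_div]
  rw [Finset.sum_comm]

lemma expec_neg : expec h d (fun B => -f B) = -expec h d f := by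
  simp only [expec, Finset.sum_neg_distrib, neg_div]

lemma expec_abs_mul_le :
    expec h d (fun B => |f B * g B|) ≤
      (expec h d (fun B => f B ^ 2) + expec h d (fun B => g B ^ 2)) / 2 := by
  calc expec h d (fun B => |f B * g B|)
      ≤ expec h d (fun B => (f B ^ 2 + g B ^ 2) / 2) := expec_mono fun b => by
        rw [abs_mul, ← sq_abs (f (signMat b)), ← sq_abs (g (signMat b))]
        linarith [two_mul_le_add_sq |f (signMat b)| |g (signMat b)|]
    _ = (expec h d (fun B => f B ^ 2) + expec h d (fun B => g B ^ 2)) / 2 := by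
        simp only [expec, ← Finset.sum_div, Finset.sum_add_distrib]
        ring

lemma expec_comp_negEntry (p : Fin h) (j : Fin d) (f : Matrix (Fin h) (Fin d) ℝ → ℝ) :
    expec h d (fun B => f (negEntry p j B)) = expec h d f := by
  let flip : Equiv.Perm (Fin h → Fin d → Bool) := Equiv.piCongrRight fun q =>
    Equiv.piCongrRight fun k => if q = p ∧ k = j then Equiv.boolNot else Equiv.refl Bool
  have signMat_flip (b) : signMat (flip b) = negEntry p j (signMat b) := by
    ext q k
    rw [negEntry_apply]
    split_ifs with hqk
    · obtain ⟨rfl, rfl⟩ := hqk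
      cases hb : b q k <;> simp [flip, signMat, hb]
    · simp [flip, signMat, hqk]
  simp only [expec, ← signMat_flip, Equiv.sum_comp flip fun b => f (signMat b)]

lemma expec_eq_zero_of_negEntry_eq_neg (p : Fin h) (j : Fin d)
    (hf : ∀ B, f (negEntry p j B) = -f B) : expec h d f = 0 := by
  have hneg : -expec h d f = expec h d f := by
    simpa only [hf, expec_neg] using expec_comp_negEntry p j f
  linarith

variable {j : Fin d} {v : Matrix (Fin h) (Fin d) ℝ → Fin h → ℝ}

lemma expec_mul_entry_mul_entry (hv : ∀ B x, v (B.updateCol j x) = v B) (p q : Fin h) :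
    expec h d (fun B => v B p * B p j * (v B q * B q j)) =
      if p = q then expec h d (fun B => v B p * v B p) else 0 := by
  split_ifs with hpq
  · subst hpq
    refine expec_congr fun b => ?_
    rw [mul_mul_mul_comm, signMat_mul_self, mul_one]
  · refine expec_eq_zero_of_negEntry_eq_neg p j fun B => ?_
    have hvB : v (negEntry p j B) = v B := hv B _
    simp [hvB, negEntry_apply, Ne.symm hpq]

lemma expec_dotProduct_col_sq (hv : ∀ B x, v (B.updateCol j x) = v B) :
    expec h d (fun B => (v B ⬝ᵥ B.col j) ^ 2) = expec h d (fun B => v B ⬝ᵥ v B) := by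
  simp only [dotProduct, col_apply, sq, Finset.sum_mul_sum, expec_sum,
    expec_mul_entry_mul_entry hv, Finset.sum_ite_eq, Finset.mem_univ, if_true]

end Expectation

section Fmat

variable {h d : ℕ} {A : Matrix (Fin h) (Fin h) ℝ} {i j : Fin d}

lemma sgn_mul_self (x : ℝ) : sgn x * sgn x = 1 := by
  unfold sgn
  split_ifs <;> norm_num

lemma Cmat_dotProduct_self (B : Matrix (Fin h) (Fin d) ℝ) : Cmat A B i ⬝ᵥ Cmat A B i = h := by
  simp [dotProduct, Cmat, sgn_mul_self]

lemma Cmat_updateCol_of_ne (hij : i ≠ j) (B : Matrix (Fin h) (Fin d) ℝ) (x : Fin h → ℝ) :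
    Cmat A (B.updateCol j x) i = Cmat A B i := by
  ext p
  simp [Cmat, mul_apply, updateCol_ne hij]

lemma Fmat_apply_eq_dotProduct (A : Matrix (Fin h) (Fin h) ℝ) (B : Matrix (Fin h) (Fin d) ℝ)
    (i j : Fin d) : Fmat A B i j = (Cmat A B i ᵥ* A⁻¹) ⬝ᵥ B.col j :=
  rfl

lemma expec_Fmat_sq (A : Matrix (Fin h) (Fin h) ℝ) (hij : i ≠ j) :
    expec h d (fun B => Fmat A B i j ^ 2) =
      expec h d (fun B => Cmat A B i ⬝ᵥ (Aᵀ * A)⁻¹ *ᵥ Cmat A B i) := by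
  have hv (B : Matrix (Fin h) (Fin d) ℝ) (x : Fin h → ℝ) :
      Cmat A (B.updateCol j x) i ᵥ* A⁻¹ = Cmat A B i ᵥ* A⁻¹ := by
    rw [Cmat_updateCol_of_ne hij]
  simp only [Fmat_apply_eq_dotProduct,
    expec_dotProduct_col_sq (v := fun B => Cmat A B i ᵥ* A⁻¹) hv, vecMul_inv_dotProduct_self]

lemma expec_Fmat_sq_le_one (hA : Aᵀ * A = (h : ℝ) • 1) (hij : i ≠ j) :
    expec h d (fun B => Fmat A B i j ^ 2) ≤ 1 := by
  rw [expec_Fmat_sq A hij]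
  refine expec_le_of_forall_le fun b => ?_
  calc Cmat A (signMat b) i ⬝ᵥ (Aᵀ * A)⁻¹ *ᵥ Cmat A (signMat b) i
      = (h : ℝ)⁻¹ * h := by
        rw [hA, inv_smul_one, smul_mulVec, one_mulVec, dotProduct_smul, Cmat_dotProduct_self,
          smul_eq_mul]
    _ ≤ 1 := inv_mul_le_one

end Fmat

theorem expec_F_product_bound_general (h d : ℕ) (A : Matrix (Fin h) (Fin h) ℝ)
    (hA : Aᵀ * A = (h : ℝ) • 1) :
    ∀ i j k l : Fin d, i ≠ j → k ≠ l →
      |expec h d (fun B => Fmat A B i j * Fmat A B k l)| ≤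
        expec h d (fun B => |Fmat A B i j * Fmat A B k l|) ∧
      expec h d (fun B => |Fmat A B i j * Fmat A B k l|) ≤ 1 := by
  intro i j k l hij hkl
  refine ⟨abs_expec_le, ?_⟩
  calc expec h d (fun B => |Fmat A B i j * Fmat A B k l|)
      ≤ (expec h d (fun B => Fmat A B i j ^ 2) + expec h d (fun B => Fmat A B k l ^ 2)) / 2 :=
        expec_abs_mul_le
    _ ≤ 1 := by linarith [expec_Fmat_sq_le_one hA hij, expec_Fmat_sq_le_one hA hkl]

/-- Let `A` be a Hadamard matrix of order `h ≥ 4`, `d ≥ 1`, and for each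
`B ∈ {−1,1}^{h×d}` set `C = sgn(AᵀB)ᵀ` and `F = C A⁻¹ B`.  Then for all
pairs `(i, j)` and `(k, ℓ)` with `i ≠ j` and `k ≠ ℓ`,
`|E[f_{ij} f_{kℓ}]| ≤ E[|f_{ij} f_{kℓ}|] ≤ 1`. -/
theorem expec_F_product_bound (h d : ℕ) (h4 : 4 ∣ h) (hh : 4 ≤ h) (hd : 1 ≤ d)
    (A : Matrix (Fin h) (Fin h) ℝ)
    (hA1 : ∀ i j, A i j = 1 ∨ A i j = -1)
    (hA2 : Aᵀ * A = (h : ℝ) • 1) :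
    ∀ i j k l : Fin d, i ≠ j → k ≠ l →
      |expec h d (fun B => Fmat A B i j * Fmat A B k l)| ≤
        expec h d (fun B => |Fmat A B i j * Fmat A B k l|) ∧
      expec h d (fun B => |Fmat A B i j * Fmat A B k l|) ≤ 1 :=
  expec_F_product_bound_general h d A hA2
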